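/- arXiv:1506.06539 — 2 statements merged into one kernel-verified Lean document; each statement's English description precedes it below -/
import Mathlib

section
/- Fix c ∈ ℂ with c ≠ 0 and an integer N ≥ 1. Let μ_1,…,μ_N be complex numbers, λ_1,…,λ_N pairwise distinct complex numbers with μ_k ≠ λ_j and λ_m−λ_j±ic ≠ 0 for all indices, and let λ_p, λ_p′, λ_s, λ_s′ ∈ ℂ be any parameters such that all quantities below are well defined (i.e. (x−λ_j)²+c² ≠ 0 and V⁺_x ≠ V⁻_x for x ∈ {λ_p, λ_p′, λ_s, λ_s′}, and V⁺_j ≠ V⁻_j for all j). Then F(μ;λ;λ_p,λ_s) = F(μ;λ;λ_p′,λ_s′); that is, the expression F is independent of the auxiliary parameters λ_p and λ_s. -/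
open Complex Finset Matrix

namespace LL

noncomputable def Kk (c x y : ℂ) : ℂ := 2 * c / ((x - y) ^ 2 + c ^ 2)

noncomputable def Vp {N M : ℕ} (c : ℂ) (μ : Fin N → ℂ) (lam : Fin M → ℂ) (x : ℂ) : ℂ :=
  (∏ m, (μ m - x + I * c)) / ∏ m, (lam m - x + I * c)

noncomputable def Vm {N M : ℕ} (c : ℂ) (μ : Fin N → ℂ) (lam : Fin M → ℂ) (x : ℂ) : ℂ :=
  (∏ m, (μ m - x - I * c)) / ∏ m, (lam m - x - I * c)

noncomputable def Xi {N M : ℕ} (μ : Fin N → ℂ) (lam : Fin M → ℂ) (j : Fin M) : ℂ :=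
  (∏ m, (μ m - lam j)) / ∏ m ∈ Finset.univ.erase j, (lam m - lam j)

noncomputable def Umat {N M : ℕ} (c : ℂ) (μ : Fin N → ℂ) (lam : Fin M → ℂ) (lp ls : ℂ) :
    Matrix (Fin M) (Fin M) ℂ := fun j k =>
  I / (Vp c μ lam (lam j) - Vm c μ lam (lam j)) * Xi μ lam j *
    (Kk c (lam j) (lam k) - Kk c lp (lam k) * Kk c ls (lam j))

noncomputable def U1mat {N M : ℕ} (c : ℂ) (μ : Fin N → ℂ) (lam : Fin M → ℂ) (lp : ℂ) :
    Matrix (Fin M) (Fin M) ℂ := fun j k =>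
  I / (Vp c μ lam (lam j) - Vm c μ lam (lam j)) * Xi μ lam j *
    (Kk c (lam j) (lam k) - Kk c lp (lam k))

noncomputable def U2mat {N M : ℕ} (c : ℂ) (μ : Fin N → ℂ) (lam : Fin M → ℂ) (lp : ℂ) :
    Matrix (Fin M) (Fin M) ℂ := fun j k =>
  U1mat c μ lam lp j k + I / (Vp c μ lam (lam j) - Vm c μ lam (lam j)) * Kk c lp (lam k)

noncomputable def HR {N M : ℕ} (c sc : ℂ) (R : ℕ) (μ : Fin N → ℂ) (lam : Fin M → ℂ)
    (lp ls : ℂ) : ℂ :=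
  (I * sc) ^ R / (c ^ (2 * R - 1) * ((R - 1).factorial : ℂ)) * (-1 : ℂ) ^ (N * (R - 1)) *
    (∏ j, ∏ k, (lam j - lam k + I * c)) *
    (∏ j, ∏ k, (lam j - μ k)⁻¹) *
    (∏ j, (Vp c μ lam (lam j) - Vm c μ lam (lam j))) *
    (1 + Umat c μ lam lp ls).det /
    ((Vp c μ lam lp - Vm c μ lam lp) * (Vp c μ lam ls - Vm c μ lam ls))

noncomputable def Jcal {N : ℕ} (μ lam : Fin N → ℂ) : ℂ :=
  (∑ j, lam j - ∑ j, μ j) ^ 4 -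
    4 * (∑ j, lam j - ∑ j, μ j) * (∑ j, lam j ^ 3 - ∑ j, μ j ^ 3) +
    3 * (∑ j, lam j ^ 2 - ∑ j, μ j ^ 2) ^ 2

noncomputable def Fff {N : ℕ} (c : ℂ) (μ lam : Fin N → ℂ) (lp ls : ℂ) : ℂ :=
  (-1 : ℂ) ^ N * (Jcal μ lam / (6 * c)) *
    (∏ j, ∏ k, (lam j - lam k + I * c)) *
    (∏ j, ∏ k, (lam j - μ k)⁻¹) *
    (∏ j, (Vp c μ lam (lam j) - Vm c μ lam (lam j))) *
    (1 + Umat c μ lam lp ls).det /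
    ((Vp c μ lam lp - Vm c μ lam lp) * (Vp c μ lam ls - Vm c μ lam ls))

noncomputable def Tcal {N M : ℕ} (μ : Fin N → ℂ) (lam : Fin M → ℂ) : ℂ :=
  (1 / 2 : ℂ) * ((∑ j, lam j - ∑ j, μ j) ^ 2 - (∑ j, lam j ^ 2 - ∑ j, μ j ^ 2))

noncomputable def Gff {N M : ℕ} (c sc : ℂ) (μ : Fin N → ℂ) (lam : Fin M → ℂ) (lp ls : ℂ) : ℂ :=
  -I * (Tcal μ lam / (c * sc)) *
    (∏ j, ∏ k, (lam j - lam k + I * c)) *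
    (∏ j, ∏ k, (lam j - μ k)⁻¹) *
    (∏ j, (Vp c μ lam (lam j) - Vm c μ lam (lam j))) *
    (1 + Umat c μ lam lp ls).det /
    ((Vp c μ lam lp - Vm c μ lam lp) * (Vp c μ lam ls - Vm c μ lam ls))

noncomputable def fsc (c x y : ℂ) : ℂ := (x - y + I * c) / (x - y)

noncomputable def stringRap (cb : ℝ) (M : ℕ) (δ : Fin M → ℂ) (j : Fin M) : ℂ :=
  I * ((cb : ℂ) / 2) * ((M : ℂ) - 1 - 2 * (j.val : ℂ)) + I * δ j

end LL

open LL

/-!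
Write `W_j = V⁺_j - V⁻_j`, `Ξ_j = ∏ (μ_m - λ_j) / ∏' (λ_m - λ_j)`, and let `A` be `1 + U` without
the term `K(λ_p, λ_k) K(λ_s, λ_j)`; then `1 + U = A + u_s v_pᵀ` is a rank-one perturbation of `A`.
Expanding `V^±_x` in partial fractions at the `λ_j` gives `∑ⱼ Ξ_j K(x, λ_j) = i (V⁺_x - V⁻_x)`.
At `x = λ_k` this says that `W` and `Ξ` are left and right null vectors of `A`; at a general `x` it
gives `W ⬝ u_x = V⁺_x - V⁻_x` and `Ξ ⬝ v_x = i (V⁺_x - V⁻_x)`. If `y A = 0`, then `det (A + u vᵀ)`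
is proportional to `y ⬝ u`, since left multiplication by `1 + (y ⬝ u)⁻¹ (u' - u) yᵀ` fixes `A` and
sends `u` to `u'`; symmetrically for right null vectors. Hence `det (1 + U)` is proportional to
`(V⁺_p - V⁻_p) (V⁺_s - V⁻_s)`, the denominator of `F`.
-/

namespace LL

section RankOnePerturbation

variable {n K : Type*} [Fintype n] [DecidableEq n] [Field K] {A : Matrix n n K}

lemma det_add_vecMulVec_of_vecMul_eq_zero {y u : n → K} (hyA : y ᵥ* A = 0) (hu : y ⬝ᵥ u ≠ 0)
    (u' v : n → K) :
    (A + vecMulVec u' v).det = (y ⬝ᵥ u') / (y ⬝ᵥ u) * (A + vecMulVec u v).det := by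
  set x : n → K := (y ⬝ᵥ u)⁻¹ • (u' - u) with hx
  have hdet : (1 + vecMulVec x y).det = (y ⬝ᵥ u') / (y ⬝ᵥ u) := by
    rw [vecMulVec_eq Unit, det_one_add_replicateCol_mul_replicateRow, hx, dotProduct_smul,
      dotProduct_sub, smul_eq_mul]
    field_simp
    ring
  have hA : (1 + vecMulVec x y) * A = A := by
    rw [Matrix.add_mul, Matrix.one_mul, vecMulVec_mul, hyA, vecMulVec_zero, add_zero]
  have hu' : (1 + vecMulVec x y) *ᵥ u = u' := by
    rw [add_mulVec, one_mulVec, vecMulVec_mulVec, hx, op_smul_eq_smul, smul_inv_smul₀ hu,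
      add_sub_cancel]
  rw [← hdet, ← det_mul, Matrix.mul_add, hA, mul_vecMulVec, hu']

lemma det_add_vecMulVec_of_mulVec_eq_zero {z v : n → K} (hAz : A *ᵥ z = 0) (hv : z ⬝ᵥ v ≠ 0)
    (u v' : n → K) :
    (A + vecMulVec u v').det = (z ⬝ᵥ v') / (z ⬝ᵥ v) * (A + vecMulVec u v).det := by
  have hzA : z ᵥ* Aᵀ = 0 := by rw [vecMul_transpose, hAz]
  rw [← det_transpose, ← det_transpose (A + vecMulVec u v)]
  simpa only [transpose_add, transpose_vecMulVec] using
    det_add_vecMulVec_of_vecMul_eq_zero hzA hv v' u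

theorem det_add_vecMulVec_div_eq {y z u u' v v' : n → K} (hyA : y ᵥ* A = 0) (hAz : A *ᵥ z = 0)
    (hu : y ⬝ᵥ u ≠ 0) (hu' : y ⬝ᵥ u' ≠ 0) (hv : z ⬝ᵥ v ≠ 0) (hv' : z ⬝ᵥ v' ≠ 0) :
    (A + vecMulVec u v).det / ((z ⬝ᵥ v) * (y ⬝ᵥ u)) =
      (A + vecMulVec u' v').det / ((z ⬝ᵥ v') * (y ⬝ᵥ u')) := by
  rw [det_add_vecMulVec_of_vecMul_eq_zero hyA hu u',
    det_add_vecMulVec_of_mulVec_eq_zero hAz hv u v']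
  field_simp

end RankOnePerturbation

section PartialFractions

open Polynomial in
theorem eval_div_eval_nodal {K ι : Type*} [Field K] [DecidableEq ι] {s : Finset ι} {v : ι → K}
    (hv : Set.InjOn v s) (p : K[X]) {x : K} (hx : ∀ i ∈ s, x ≠ v i) :
    p.eval x / (Lagrange.nodal s v).eval x = (p /ₘ Lagrange.nodal s v).eval x +
      ∑ i ∈ s, Lagrange.nodalWeight s v i * (x - v i)⁻¹ * p.eval (v i) := by
  set q := Lagrange.nodal s v
  have hq : q.Monic := Lagrange.nodal_monic
  have hdiv : p %ₘ q + q * (p /ₘ q) = p := modByMonic_add_div p q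
  have hdeg : (p %ₘ q).degree < #s := by
    simpa only [q, Lagrange.degree_nodal] using degree_modByMonic_lt p hq
  have hnode : ∀ i ∈ s, (p %ₘ q).eval (v i) = p.eval (v i) := fun i hi => by
    rw [← congrArg (eval (v i)) hdiv, eval_add, eval_mul, Lagrange.eval_nodal_at_node hi, zero_mul,
      add_zero]
  have hrem := congrArg (eval x) (Lagrange.eq_interpolate_of_eval_eq _ hv hdeg hnode)
  rw [Lagrange.eval_interpolate_not_at_node _ hx] at hrem
  rw [div_eq_iff (Lagrange.eval_nodal_not_at_node hx), ← congrArg (eval x) hdiv, eval_add, eval_mul,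
    hrem]
  ring

theorem exists_prod_sub_div_prod_sub_eq {K ι κ : Type*} [Field K] [Fintype ι] [Fintype κ]
    [DecidableEq κ] (hcard : Fintype.card ι ≤ Fintype.card κ) (a : ι → K) {b : κ → K}
    (hb : Function.Injective b) :
    ∃ r : K, ∀ z, (∀ j, b j - z ≠ 0) →
      (∏ m, (a m - z)) / ∏ m, (b m - z) =
        r + ∑ j, (∏ m, (a m - b j)) / (∏ m ∈ univ.erase j, (b m - b j)) / (b j - z) := by
  have hdeg : (Lagrange.nodal univ (-a) /ₘ Lagrange.nodal univ (-b)).natDegree = 0 := by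
    rw [Polynomial.natDegree_divByMonic _ Lagrange.nodal_monic, Lagrange.natDegree_nodal,
      Lagrange.natDegree_nodal, card_univ, card_univ, Nat.sub_eq_zero_of_le hcard]
  obtain ⟨r, hr⟩ := Polynomial.natDegree_eq_zero.mp hdeg
  refine ⟨r, fun z hz => ?_⟩
  have hfrac := eval_div_eval_nodal (s := univ) (v := -b) (neg_injective.comp hb).injOn
    (Lagrange.nodal univ (-a)) (x := -z)
    (fun j _ h => hz j (sub_eq_zero.mpr (neg_injective h).symm))
  simpa only [← hr, Polynomial.eval_C, Lagrange.eval_nodal, Lagrange.nodalWeight, Pi.neg_apply,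
    neg_sub_neg, sub_neg_eq_add, neg_add_eq_sub, prod_inv_distrib, div_eq_mul_inv, mul_comm,
    mul_left_comm] using hfrac

variable {N M : ℕ} {c : ℂ} {μ : Fin N → ℂ} {lam : Fin M → ℂ}

lemma sq_add_sq_eq_mul (x c : ℂ) : x ^ 2 + c ^ 2 = (x + I * c) * (x - I * c) := by
  linear_combination c ^ 2 * I_sq

lemma Kk_comm (c x y : ℂ) : Kk c x y = Kk c y x := by
  rw [Kk, Kk, sub_sq_comm]

theorem sum_Xi_mul_Kk (hNM : N ≤ M) (hinj : Function.Injective lam) {x : ℂ}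
    (hx : ∀ j, (x - lam j) ^ 2 + c ^ 2 ≠ 0) :
    ∑ j, Xi μ lam j * Kk c x (lam j) = I * (Vp c μ lam x - Vm c μ lam x) := by
  have hfac : ∀ j, (x - lam j) ^ 2 + c ^ 2 = (lam j - x + I * c) * (lam j - x - I * c) :=
    fun j => by rw [sub_sq_comm, sq_add_sq_eq_mul]
  have hplus : ∀ j, lam j - x + I * c ≠ 0 := fun j => left_ne_zero_of_mul (hfac j ▸ hx j)
  have hminus : ∀ j, lam j - x - I * c ≠ 0 := fun j => right_ne_zero_of_mul (hfac j ▸ hx j)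
  obtain ⟨r, hr⟩ := exists_prod_sub_div_prod_sub_eq (by simpa using hNM) μ hinj
  have hVp : Vp c μ lam x = r + ∑ j, Xi μ lam j / (lam j - x + I * c) := by
    simpa only [Vp, Xi, ← sub_add] using hr (x - I * c) (by simpa only [← sub_add] using hplus)
  have hVm : Vm c μ lam x = r + ∑ j, Xi μ lam j / (lam j - x - I * c) := by
    simpa only [Vm, Xi, ← sub_sub] using hr (x + I * c) (by simpa only [← sub_sub] using hminus)
  rw [hVp, hVm, add_sub_add_left_eq_sub, ← sum_sub_distrib, mul_sum]
  refine sum_congr rfl fun j _ => ?_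
  rw [Kk, hfac, div_sub_div _ _ (hplus j) (hminus j), mul_div_assoc', mul_div_assoc']
  congr 1
  linear_combination 2 * c * Xi μ lam j * I_sq

end PartialFractions

section NullVectors

variable {N M : ℕ} {c : ℂ} {μ : Fin N → ℂ} {lam : Fin M → ℂ}

/-- The part of `1 + U` that does not involve the auxiliary parameters, with entries
`δ_{jk} + i Ξ_j K(λ_j, λ_k) / (V⁺_j - V⁻_j)`, where `Ξ_j` is `Xi μ lam j`. -/
noncomputable def baseMat (c : ℂ) (μ : Fin N → ℂ) (lam : Fin M → ℂ) : Matrix (Fin M) (Fin M) ℂ :=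
  1 + of fun j k => I / (Vp c μ lam (lam j) - Vm c μ lam (lam j)) * Xi μ lam j *
    Kk c (lam j) (lam k)

/-- The column factor of the rank-one matrix `1 + U - baseMat`, where `x` is the parameter `λ_s`.
The minus sign in front of `K(λ_p, λ_k) K(λ_s, λ_j)` is absorbed here. -/
noncomputable def auxCol (c : ℂ) (μ : Fin N → ℂ) (lam : Fin M → ℂ) (x : ℂ) : Fin M → ℂ :=
  fun j => -(I / (Vp c μ lam (lam j) - Vm c μ lam (lam j)) * Xi μ lam j * Kk c x (lam j))

lemma one_add_Umat (c : ℂ) (μ : Fin N → ℂ) (lam : Fin M → ℂ) (lp ls : ℂ) :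
    1 + Umat c μ lam lp ls =
      baseMat c μ lam + vecMulVec (auxCol c μ lam ls) (fun k => Kk c lp (lam k)) := by
  ext j k
  simp only [baseMat, auxCol, Umat, Matrix.add_apply, of_apply, vecMulVec_apply]
  ring

lemma dotProduct_auxCol (hNM : N ≤ M) (hinj : Function.Injective lam)
    (hV : ∀ j, Vp c μ lam (lam j) ≠ Vm c μ lam (lam j)) {x : ℂ}
    (hx : ∀ j, (x - lam j) ^ 2 + c ^ 2 ≠ 0) :
    (fun j => Vp c μ lam (lam j) - Vm c μ lam (lam j)) ⬝ᵥ auxCol c μ lam x =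
      Vp c μ lam x - Vm c μ lam x := by
  have hterm : ∀ j, (Vp c μ lam (lam j) - Vm c μ lam (lam j)) * auxCol c μ lam x j =
      -I * (Xi μ lam j * Kk c x (lam j)) := fun j => by
    have hW := sub_ne_zero.mpr (hV j)
    rw [auxCol]
    field_simp
  simp only [dotProduct, hterm]
  rw [← mul_sum, sum_Xi_mul_Kk hNM hinj hx]
  linear_combination -(Vp c μ lam x - Vm c μ lam x) * I_sq

lemma vecMul_baseMat (hNM : N ≤ M) (hinj : Function.Injective lam)
    (hlam : ∀ k j, (lam k - lam j) ^ 2 + c ^ 2 ≠ 0)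
    (hV : ∀ j, Vp c μ lam (lam j) ≠ Vm c μ lam (lam j)) :
    (fun j => Vp c μ lam (lam j) - Vm c μ lam (lam j)) ᵥ* baseMat c μ lam = 0 := by
  ext k
  have hcol : (fun j => baseMat c μ lam j k) = Pi.single k 1 - auxCol c μ lam (lam k) := by
    ext j
    simp only [baseMat, auxCol, Matrix.add_apply, one_apply, of_apply, Pi.sub_apply,
      Pi.single_apply, Kk_comm c (lam j) (lam k), sub_neg_eq_add]
  rw [vecMul, hcol, dotProduct_sub, dotProduct_auxCol hNM hinj hV (hlam k), dotProduct_single_one,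
    sub_self, Pi.zero_apply]

lemma baseMat_mulVec_Xi (hNM : N ≤ M) (hinj : Function.Injective lam)
    (hlam : ∀ k j, (lam k - lam j) ^ 2 + c ^ 2 ≠ 0)
    (hV : ∀ j, Vp c μ lam (lam j) ≠ Vm c μ lam (lam j)) :
    baseMat c μ lam *ᵥ Xi μ lam = 0 := by
  ext j
  have hW := sub_ne_zero.mpr (hV j)
  rw [baseMat, add_mulVec, one_mulVec, Pi.add_apply, Pi.zero_apply]
  calc Xi μ lam j + ∑ k, I / (Vp c μ lam (lam j) - Vm c μ lam (lam j)) * Xi μ lam j *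
        Kk c (lam j) (lam k) * Xi μ lam k
      = Xi μ lam j + I / (Vp c μ lam (lam j) - Vm c μ lam (lam j)) * Xi μ lam j *
          ∑ k, Xi μ lam k * Kk c (lam j) (lam k) := by
        rw [mul_sum]
        exact congrArg _ (sum_congr rfl fun k _ => by ring)
    _ = Xi μ lam j + I * I * Xi μ lam j := by
        rw [sum_Xi_mul_Kk hNM hinj (hlam j)]
        field_simp
    _ = 0 := by rw [I_mul_I]; ring

end NullVectors

end LL

theorem F_independent_of_aux_general {N M : ℕ} (hNM : N ≤ M) (c : ℂ) (μ : Fin N → ℂ)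
    (lam : Fin M → ℂ) (hinj : Function.Injective lam)
    (hlam : ∀ k j, (lam k - lam j) ^ 2 + c ^ 2 ≠ 0) (lp lp' ls ls' : ℂ)
    (haux : ∀ x ∈ ({lp, lp', ls, ls'} : Set ℂ),
      (∀ j, (x - lam j) ^ 2 + c ^ 2 ≠ 0) ∧ Vp c μ lam x ≠ Vm c μ lam x)
    (hV : ∀ j, Vp c μ lam (lam j) ≠ Vm c μ lam (lam j)) :
    (1 + Umat c μ lam lp ls).det /
        ((Vp c μ lam lp - Vm c μ lam lp) * (Vp c μ lam ls - Vm c μ lam ls)) =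
      (1 + Umat c μ lam lp' ls').det /
        ((Vp c μ lam lp' - Vm c μ lam lp') * (Vp c μ lam ls' - Vm c μ lam ls')) := by
  simp only [Set.mem_insert_iff, Set.mem_singleton_iff, forall_eq_or_imp, forall_eq] at haux
  obtain ⟨⟨hp, hVp⟩, ⟨hp', hVp'⟩, ⟨hs, hVs⟩, ⟨hs', hVs'⟩⟩ := haux
  have hcol {x : ℂ} := dotProduct_auxCol (x := x) hNM hinj hV
  have hrow {x : ℂ} (hx : ∀ j, (x - lam j) ^ 2 + c ^ 2 ≠ 0) :
      Xi μ lam ⬝ᵥ (fun k => Kk c x (lam k)) = I * (Vp c μ lam x - Vm c μ lam x) :=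
    sum_Xi_mul_Kk hNM hinj hx
  have hdet := det_add_vecMulVec_div_eq (vecMul_baseMat hNM hinj hlam hV)
    (baseMat_mulVec_Xi hNM hinj hlam hV)
    (by rw [hcol hs]; exact sub_ne_zero.mpr hVs) (by rw [hcol hs']; exact sub_ne_zero.mpr hVs')
    (by rw [hrow hp]; exact mul_ne_zero I_ne_zero (sub_ne_zero.mpr hVp))
    (by rw [hrow hp']; exact mul_ne_zero I_ne_zero (sub_ne_zero.mpr hVp'))
  rw [hcol hs, hcol hs', hrow hp, hrow hp', ← one_add_Umat, ← one_add_Umat, mul_assoc, mul_assoc,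
    div_mul_eq_div_div_swap, div_mul_eq_div_div_swap _ I] at hdet
  exact (div_left_inj' I_ne_zero).mp hdet

/-- The determinant formula `F` for the form factor of `(Ψ†(0))²Ψ²(0)` is independent of the
auxiliary parameters `λ_p` and `λ_s`. -/
theorem F_independent_of_aux {N : ℕ} (c : ℂ) (hc : c ≠ 0) (hN : 1 ≤ N)
    (μ lam : Fin N → ℂ) (hinj : Function.Injective lam)
    (hmulam : ∀ k j, μ k ≠ lam j)
    (hpm : ∀ m j, lam m - lam j + I * c ≠ 0 ∧ lam m - lam j - I * c ≠ 0)
    (lp lp' ls ls' : ℂ)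
    (haux : ∀ x ∈ ({lp, lp', ls, ls'} : Set ℂ),
      (∀ j, (x - lam j) ^ 2 + c ^ 2 ≠ 0) ∧ Vp c μ lam x ≠ Vm c μ lam x)
    (hV : ∀ j, Vp c μ lam (lam j) ≠ Vm c μ lam (lam j)) :
    Fff c μ lam lp ls = Fff c μ lam lp' ls' := by
  have hlam := fun k j => sq_add_sq_eq_mul (lam k - lam j) c ▸ mul_ne_zero (hpm k j).1 (hpm k j).2
  simp only [Fff, mul_div_assoc,
    F_independent_of_aux_general le_rfl c μ lam hinj hlam lp lp' ls ls' haux hV]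
end

section
/- Fix c ∈ ℂ with c ≠ 0, a square root √c, and N ≥ 1. Let λ_1,…,λ_{N+1} be pairwise distinct with λ_m−λ_j±ic ≠ 0, let μ_1,…,μ_{N−1}, λ_p, λ_s be fixed complex numbers satisfying the nondegeneracy hypotheses (for both the G expression below, built from N μ's, and for H_2 built from the N−1 parameters μ_1,…,μ_{N−1}). Then, as μ_N → ∞, G(μ_1,…,μ_N; λ_1,…,λ_{N+1}; λ_p,λ_s) → i√c · H_2(μ_1,…,μ_{N−1}; λ_1,…,λ_{N+1}; λ_p,λ_s). -/
open Complex Finset Matrix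

open LL

/-! Appending `x` to the parameters `μ` multiplies `Xi` and each of the two terms of `Vp - Vm` by an
affine function of `x`, so both grow like `x`, while `Tcal` grows like `x ^ 2`. In `G` these growths
cancel: every `Vp - Vm` at a `λ_j` is paired with `(λ_j - x)⁻¹`, contributing a sign in the limit;
the entries of the determinant involve `Xi / (Vp - Vm)`; and `Tcal` is paired with the product of
the two differences at `λ_p` and `λ_s`. What remains is `H₂` up to a constant, which `√c ^ 2 = c`
identifies as `i√c`. -/

open Bornology Filter Topology

section NormedField

variable {𝕜 : Type*} [NormedField 𝕜]

lemma tendsto_add_const_div_self_cobounded (a : 𝕜) :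
    Tendsto (fun x => (x + a) / x) (cobounded 𝕜) (𝓝 1) := by
  have h : Tendsto (fun x => 1 + a * x⁻¹) (cobounded 𝕜) (𝓝 1) := by
    simpa using (tendsto_inv₀_cobounded.const_mul a).const_add 1
  refine h.congr' ?_
  filter_upwards [eventually_ne_cobounded 0] with x hx
  field_simp

lemma tendsto_const_sub_div_self_cobounded (a : 𝕜) :
    Tendsto (fun x => (a - x) / x) (cobounded 𝕜) (𝓝 (-1)) :=
  (tendsto_add_const_div_self_cobounded (-a)).neg.congr fun x => by ring

lemma tendsto_div_of_tendsto_div_pow {f g : 𝕜 → 𝕜} {a b : 𝕜} (d : ℕ)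
    (hf : Tendsto (fun x => f x / x ^ d) (cobounded 𝕜) (𝓝 a))
    (hg : Tendsto (fun x => g x / x ^ d) (cobounded 𝕜) (𝓝 b)) (hb : b ≠ 0) :
    Tendsto (fun x => f x / g x) (cobounded 𝕜) (𝓝 (a / b)) := by
  refine (hf.div hg hb).congr' ?_
  filter_upwards [eventually_ne_cobounded 0] with x hx
  exact div_div_div_cancel_right₀ (pow_ne_zero d hx) _ _

lemma tendsto_div_of_tendsto_div_self {f g : 𝕜 → 𝕜} {a b : 𝕜}
    (hf : Tendsto (fun x => f x / x) (cobounded 𝕜) (𝓝 a))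
    (hg : Tendsto (fun x => g x / x) (cobounded 𝕜) (𝓝 b)) (hb : b ≠ 0) :
    Tendsto (fun x => f x / g x) (cobounded 𝕜) (𝓝 (a / b)) :=
  tendsto_div_of_tendsto_div_pow 1 (by simpa using hf) (by simpa using hg) hb

end NormedField

namespace LL

/-- The difference `Ṽ⁺ - Ṽ⁻` as a function of the spectral parameter `y`, so that the paper's
`Ṽ⁺_{R,j} - Ṽ⁻_{R,j}` is its value at `y = λ_j`. -/
noncomputable def Vdiff {N M : ℕ} (c : ℂ) (μ : Fin N → ℂ) (lam : Fin M → ℂ) (y : ℂ) : ℂ :=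
  Vp c μ lam y - Vm c μ lam y

variable {n M : ℕ} (c sc : ℂ) (μ : Fin n → ℂ) (lam : Fin M → ℂ) (lp ls : ℂ)

lemma Vdiff_snoc (x y : ℂ) :
    Vdiff c (Fin.snoc μ x) lam y =
      Vp c μ lam y * (x + (-y + I * c)) - Vm c μ lam y * (x + (-y - I * c)) := by
  simp only [Vdiff, Vp, Vm, Fin.prod_univ_castSucc (n := n), Fin.snoc_castSucc, Fin.snoc_last]
  ring

lemma Xi_snoc (x : ℂ) (j : Fin M) :
    Xi (Fin.snoc μ x) lam j = Xi μ lam j * (x + -lam j) := by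
  simp only [Xi, Fin.prod_univ_castSucc (n := n), Fin.snoc_castSucc, Fin.snoc_last]
  ring

lemma Tcal_snoc (x : ℂ) :
    Tcal (Fin.snoc μ x) lam = x ^ 2 - (∑ j, lam j - ∑ k, μ k) * x + Tcal μ lam := by
  simp only [Tcal, Fin.sum_univ_castSucc (n := n), Fin.snoc_castSucc, Fin.snoc_last]
  ring

lemma tendsto_Vdiff_snoc_div_self (y : ℂ) :
    Tendsto (fun x => Vdiff c (Fin.snoc μ x) lam y / x) (cobounded ℂ) (𝓝 (Vdiff c μ lam y)) := by
  have h := ((tendsto_add_const_div_self_cobounded (-y + I * c)).const_mul (Vp c μ lam y)).sub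
    ((tendsto_add_const_div_self_cobounded (-y - I * c)).const_mul (Vm c μ lam y))
  rw [mul_one, mul_one] at h
  refine h.congr fun x => ?_
  rw [Vdiff_snoc]
  ring

lemma tendsto_Xi_snoc_div_self (j : Fin M) :
    Tendsto (fun x => Xi (Fin.snoc μ x) lam j / x) (cobounded ℂ) (𝓝 (Xi μ lam j)) := by
  simpa only [Xi_snoc, mul_div_assoc, mul_one] using
    (tendsto_add_const_div_self_cobounded (-lam j)).const_mul (Xi μ lam j)

lemma tendsto_Tcal_snoc_div_sq :
    Tendsto (fun x => Tcal (Fin.snoc μ x) lam / x ^ 2) (cobounded ℂ) (𝓝 1) := by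
  set p := ∑ j, lam j - ∑ k, μ k with hp
  have hinv : Tendsto (fun x : ℂ => x⁻¹) (cobounded ℂ) (𝓝 0) := tendsto_inv₀_cobounded
  have h : Tendsto (fun x => 1 - p * x⁻¹ + Tcal μ lam * x⁻¹ ^ 2) (cobounded ℂ) (𝓝 1) := by
    simpa using ((hinv.const_mul p).const_sub 1).add ((hinv.pow 2).const_mul (Tcal μ lam))
  refine h.congr' ?_
  filter_upwards [eventually_ne_cobounded 0] with x hx
  rw [Tcal_snoc, ← hp]
  field_simp

lemma tendsto_prod_Vdiff_snoc_div_sub :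
    Tendsto (fun x => ∏ j, Vdiff c (Fin.snoc μ x) lam (lam j) / (lam j - x)) (cobounded ℂ)
      (𝓝 ((-1) ^ M * ∏ j, Vdiff c μ lam (lam j))) := by
  have h := tendsto_finsetProd Finset.univ fun j _ =>
    tendsto_div_of_tendsto_div_self (tendsto_Vdiff_snoc_div_self c μ lam (lam j))
      (tendsto_const_sub_div_self_cobounded (lam j)) (neg_ne_zero.2 one_ne_zero)
  simpa only [div_neg, div_one, Finset.prod_neg, Finset.card_univ, Fintype.card_fin] using h

variable {lp ls} in
lemma tendsto_Tcal_snoc_div_Vdiff_snoc_mul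
    (hp : Vdiff c μ lam lp ≠ 0) (hs : Vdiff c μ lam ls ≠ 0) :
    Tendsto (fun x => Tcal (Fin.snoc μ x) lam /
        (Vdiff c (Fin.snoc μ x) lam lp * Vdiff c (Fin.snoc μ x) lam ls)) (cobounded ℂ)
      (𝓝 (1 / (Vdiff c μ lam lp * Vdiff c μ lam ls))) := by
  have hden : Tendsto (fun x =>
      Vdiff c (Fin.snoc μ x) lam lp * Vdiff c (Fin.snoc μ x) lam ls / x ^ 2) (cobounded ℂ)
      (𝓝 (Vdiff c μ lam lp * Vdiff c μ lam ls)) :=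
    ((tendsto_Vdiff_snoc_div_self c μ lam lp).mul
      (tendsto_Vdiff_snoc_div_self c μ lam ls)).congr fun x => by ring
  exact tendsto_div_of_tendsto_div_pow 2 (tendsto_Tcal_snoc_div_sq μ lam) hden (mul_ne_zero hp hs)

lemma Umat_apply_eq (j k : Fin M) :
    Umat c μ lam lp ls j k = I * (Xi μ lam j / Vdiff c μ lam (lam j)) *
      (Kk c (lam j) (lam k) - Kk c lp (lam k) * Kk c ls (lam j)) := by
  simp only [Umat, Vdiff]
  ring

variable {c μ lam} in
lemma tendsto_Umat_snoc (hV : ∀ j, Vdiff c μ lam (lam j) ≠ 0) :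
    Tendsto (fun x => Umat c (Fin.snoc μ x) lam lp ls) (cobounded ℂ)
      (𝓝 (Umat c μ lam lp ls)) := by
  refine tendsto_pi_nhds.2 fun j => tendsto_pi_nhds.2 fun k => ?_
  simp only [Umat_apply_eq]
  exact ((tendsto_div_of_tendsto_div_self (tendsto_Xi_snoc_div_self μ lam j)
    (tendsto_Vdiff_snoc_div_self c μ lam (lam j)) (hV j)).const_mul I).mul_const _

variable {c μ lam} in
lemma tendsto_det_one_add_Umat_snoc (hV : ∀ j, Vdiff c μ lam (lam j) ≠ 0) :
    Tendsto (fun x => (1 + Umat c (Fin.snoc μ x) lam lp ls).det) (cobounded ℂ)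
      (𝓝 (1 + Umat c μ lam lp ls).det) :=
  (Continuous.matrix_det continuous_id).continuousAt.tendsto.comp
    ((tendsto_Umat_snoc lp ls hV).const_add 1)

lemma Gff_snoc (x : ℂ) :
    Gff c sc (Fin.snoc μ x) lam lp ls =
      -I / (c * sc) * (∏ j, ∏ k, (lam j - lam k + I * c)) * (∏ j, ∏ k, (lam j - μ k)⁻¹) *
        (∏ j, Vdiff c (Fin.snoc μ x) lam (lam j) / (lam j - x)) *
        (1 + Umat c (Fin.snoc μ x) lam lp ls).det *
        (Tcal (Fin.snoc μ x) lam /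
          (Vdiff c (Fin.snoc μ x) lam lp * Vdiff c (Fin.snoc μ x) lam ls)) := by
  have hprod : ∏ j, ∏ k, (lam j - (Fin.snoc μ x : Fin (n + 1) → ℂ) k)⁻¹ =
      (∏ j, ∏ k, (lam j - μ k)⁻¹) * ∏ j, (lam j - x)⁻¹ := by
    simp only [Fin.prod_univ_castSucc (n := n), Fin.snoc_castSucc, Fin.snoc_last,
      Finset.prod_mul_distrib]
  simp only [Gff, hprod, Vdiff, div_eq_mul_inv, Finset.prod_mul_distrib]
  ring

variable {c sc} in
lemma I_mul_mul_HR_two (hc : c ≠ 0) (hsc : sc ^ 2 = c) :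
    I * sc * HR c sc 2 μ lam lp ls =
      (-1) ^ n * (-I / (c * sc) * (∏ j, ∏ k, (lam j - lam k + I * c)) *
        (∏ j, ∏ k, (lam j - μ k)⁻¹) * (∏ j, Vdiff c μ lam (lam j)) *
        (1 + Umat c μ lam lp ls).det * (1 / (Vdiff c μ lam lp * Vdiff c μ lam ls))) := by
  have hsc0 : sc ≠ 0 := by
    rintro rfl
    exact hc (by simpa using hsc.symm)
  have hconst : I * sc * ((I * sc) ^ 2 / c ^ 3) = -I / (c * sc) := by
    rw [mul_pow, hsc, I_sq]
    field_simp
    rw [hsc]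
  simp only [HR, Vdiff, ← hconst, Nat.reduceMul, Nat.reduceSub, Nat.factorial_one, Nat.cast_one,
    mul_one]
  ring

end LL

theorem G_tendsto_at_infty_general {n M : ℕ} (c sc : ℂ) (hc : c ≠ 0) (hsc : sc ^ 2 = c)
    (μ0 : Fin n → ℂ) (lam : Fin M → ℂ) (hinj : Function.Injective lam)
    (lp ls : ℂ)
    (hmulam : ∀ k j, μ0 k ≠ lam j)
    (hpm : ∀ j k, lam j - lam k + I * c ≠ 0 ∧ lam j - lam k - I * c ≠ 0)
    (hp1 : ∀ j, (lp - lam j) ^ 2 + c ^ 2 ≠ 0)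
    (hs1 : ∀ j, (ls - lam j) ^ 2 + c ^ 2 ≠ 0)
    (hVred : ∀ j, Vp c μ0 lam (lam j) ≠ Vm c μ0 lam (lam j))
    (hVredp : Vp c μ0 lam lp ≠ Vm c μ0 lam lp)
    (hVreds : Vp c μ0 lam ls ≠ Vm c μ0 lam ls) :
    Tendsto (fun x => Gff c sc (Fin.snoc μ0 x) lam lp ls) (cobounded ℂ)
      (𝓝 ((-1) ^ (n + M) * (I * sc * HR c sc 2 μ0 lam lp ls))) := by
  have hprod := tendsto_prod_Vdiff_snoc_div_sub c μ0 lam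
  have hdet := tendsto_det_one_add_Umat_snoc lp ls fun j => sub_ne_zero.2 (hVred j)
  have hratio := tendsto_Tcal_snoc_div_Vdiff_snoc_mul c μ0 lam
    (sub_ne_zero.2 hVredp) (sub_ne_zero.2 hVreds)
  have hsign : (-1 : ℂ) ^ (n + M) * (-1) ^ n = (-1) ^ M := by
    rw [add_comm n M, pow_add, mul_assoc, ← mul_pow]
    simp
  simp only [Gff_snoc]
  convert ((hprod.const_mul _).mul hdet).mul hratio using 2
  rw [I_mul_mul_HR_two μ0 lam lp ls hc hsc, ← mul_assoc, hsign]
  ring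

/-- Asymptotics (property 2 with `h = 1, k = 2`): as `μ_N → ∞`, the determinant formula `G`
for the form factor of `Ψ†(0)Ψ²(0)` (built from `N` μ's and `N+1` λ's) tends to
`i√c · H₂(μ₁,…,μ_{N−1}; λ₁,…,λ_{N+1})`. -/
theorem G_tendsto_at_infty {n : ℕ} (c sc : ℂ) (hc : c ≠ 0) (hsc : sc ^ 2 = c)
    (μ0 : Fin n → ℂ) (lam : Fin (n + 2) → ℂ) (hinj : Function.Injective lam)
    (lp ls : ℂ)
    (hmulam : ∀ k j, μ0 k ≠ lam j)
    (hpm : ∀ j k, lam j - lam k + I * c ≠ 0 ∧ lam j - lam k - I * c ≠ 0)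
    (hp1 : ∀ j, (lp - lam j) ^ 2 + c ^ 2 ≠ 0)
    (hs1 : ∀ j, (ls - lam j) ^ 2 + c ^ 2 ≠ 0)
    (hVred : ∀ j, Vp c μ0 lam (lam j) ≠ Vm c μ0 lam (lam j))
    (hVredp : Vp c μ0 lam lp ≠ Vm c μ0 lam lp)
    (hVreds : Vp c μ0 lam ls ≠ Vm c μ0 lam ls) :
    Filter.Tendsto (fun x : ℂ => Gff c sc (Fin.snoc μ0 x) lam lp ls)
      (Bornology.cobounded ℂ ⊓ Filter.principal
        {x : ℂ |
          (∀ j, x ≠ lam j) ∧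
          (∀ j, Vp c (Fin.snoc μ0 x) lam (lam j) ≠ Vm c (Fin.snoc μ0 x) lam (lam j)) ∧
          Vp c (Fin.snoc μ0 x) lam lp ≠ Vm c (Fin.snoc μ0 x) lam lp ∧
          Vp c (Fin.snoc μ0 x) lam ls ≠ Vm c (Fin.snoc μ0 x) lam ls})
      (nhds (I * sc * HR c sc 2 μ0 lam lp ls)) := by
  have h := G_tendsto_at_infty_general c sc hc hsc μ0 lam hinj lp ls hmulam hpm hp1 hs1 hVred
    hVredp hVreds
  simpa [← add_assoc, ← two_mul, pow_add, pow_mul] using h.mono_left inf_le_left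
end
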